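/- Let s ∈ (0,1) and let φ ∈ C¹_c(ℝⁿ) be nonnegative with compact support of diameter d_φ. Then for all 1 ≤ p ≤ ∞ and u ∈ L^p_{uloc}(ℝⁿ), the commutator satisfies the global bound ‖[φ, Λˢ]u‖_{L^p(ℝⁿ)} ≤ C_{s,d_φ} (M_φ + 1) ‖u‖_{L^p_{uloc}(ℝⁿ)}, where M_φ = ‖φ‖_∞^{1-s} ‖∇φ‖_∞^{s}. -/

import Mathlib

open MeasureTheory Metric
open scoped ENNReal

/-! Split the integral defining the commutator at a ball of radius `d_φ + 1` centred in the support
of `φ`, and let `M = ‖φ‖_∞^{1-s} ‖∇φ‖_∞^s`.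

For `y` in this ball, the kernel is dominated by
`min (‖∇φ‖_∞ |x - y|) (2 ‖φ‖_∞) / |x - y|^{n+s}`. Dilating by `‖∇φ‖_∞ / (2 ‖φ‖_∞)` shows that its
integral in either variable is at most a constant times `M`, so Schur's test bounds this part by the
`L^p` norm of `u` on the ball, which finitely many unit balls cover.

For `y` outside the ball, `φ y = 0`, so only `x` in the support contribute, and there the kernel is
at most a constant times `‖φ‖_∞ (1 + |x - y|)^{-n-s}`. Averaging over unit balls bounds the integral
of this weight against `|u|` by the uniformly local norm, uniformly in `x`. Since `φ` vanishes
somewhere at distance `d_φ + 1` from any point of its support, `‖φ‖_∞ ≤ (d_φ + 1) ‖∇φ‖_∞`, and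
interpolating this with `‖φ‖_∞` itself gives `‖φ‖_∞ ≤ (d_φ + 1)^s M`. -/

open Module (finrank)
open scoped NNReal

section RealPowers

lemma ennreal_rpow_le_max_one {a : ℝ≥0∞} {r : ℝ} (hr : r ∈ Set.Icc 0 1) : a ^ r ≤ max 1 a := by
  rcases le_total a 1 with ha | ha
  · exact (ENNReal.rpow_le_one ha hr.1).trans (le_max_left _ _)
  · calc a ^ r ≤ a ^ (1 : ℝ) := ENNReal.rpow_le_rpow_of_exponent_le ha hr.2
      _ ≤ max 1 a := (ENNReal.rpow_one a).trans_le (le_max_right _ _)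

lemma one_le_ennreal_toReal {p : ℝ≥0∞} (hp : 1 ≤ p) (hp_top : p ≠ ∞) : 1 ≤ p.toReal :=
  ENNReal.toReal_one ▸ ENNReal.toReal_mono hp_top hp

lemma one_div_toReal_mem_Icc {p : ℝ≥0∞} (hp : 1 ≤ p) : 1 / p.toReal ∈ Set.Icc (0 : ℝ) 1 := by
  rcases eq_or_ne p ∞ with rfl | hp_top
  · simp
  · exact ⟨by positivity, div_le_one_of_le₀ (one_le_ennreal_toReal hp hp_top) (by positivity)⟩

lemma le_rpow_mul_rpow_of_le {a b c s : ℝ} (ha : 0 ≤ a) (hab : a ≤ b) (hac : a ≤ c)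
    (hs : s ∈ Set.Icc 0 1) : a ≤ b ^ (1 - s) * c ^ s := by
  have hs' : 0 ≤ 1 - s := sub_nonneg.2 hs.2
  calc a = a ^ (1 - s) * a ^ s := by
        rw [← Real.rpow_add_of_nonneg ha hs' hs.1, sub_add_cancel, Real.rpow_one]
    _ ≤ b ^ (1 - s) * c ^ s :=
        mul_le_mul (Real.rpow_le_rpow ha hab hs') (Real.rpow_le_rpow ha hac hs.1)
          (Real.rpow_nonneg ha s) (Real.rpow_nonneg (ha.trans hab) _)

lemma rpow_neg_le_two_rpow_mul_rpow_neg {a b r : ℝ} (ha : 0 < a) (hb : 0 < b) (hba : b ≤ 2 * a)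
    (hr : 0 ≤ r) : a ^ (-r) ≤ 2 ^ r * b ^ (-r) := by
  calc a ^ (-r) = 2 ^ r * (2 * a) ^ (-r) := by
        rw [Real.mul_rpow two_pos.le ha.le, ← mul_assoc, ← Real.rpow_add two_pos, add_neg_cancel,
          Real.rpow_zero, one_mul]
    _ ≤ 2 ^ r * b ^ (-r) := by
        gcongr ?_ * ?_
        exact Real.rpow_le_rpow_of_nonpos hb hba (neg_nonpos.2 hr)

end RealPowers

section MeasureSpace

variable {α β : Type*} [MeasurableSpace α] [MeasurableSpace β] {μ : Measure α} {ν : Measure β}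

lemma lintegral_mul_rpow_le {k f : α → ℝ≥0∞} (hk : Measurable k) (hf : Measurable f)
    {r : ℝ} (hr : 1 ≤ r) :
    (∫⁻ x, k x * f x ∂μ) ^ r ≤ (∫⁻ x, k x ∂μ) ^ (r - 1) * ∫⁻ x, k x * f x ^ r ∂μ := by
  have hr₀ : 0 < r := by positivity
  have h_inv : 0 ≤ 1 / r := by positivity
  have h_sub : 0 ≤ 1 - 1 / r := sub_nonneg.2 (div_le_one_of_le₀ hr hr₀.le)
  have hkf (x : α) : k x * f x = k x ^ (1 - 1 / r) * (k x * f x ^ r) ^ (1 / r) := by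
    rw [ENNReal.mul_rpow_of_nonneg _ _ h_inv, ← mul_assoc,
      ← ENNReal.rpow_add_of_nonneg _ _ h_sub h_inv, sub_add_cancel, ENNReal.rpow_one,
      ← ENNReal.rpow_mul, mul_one_div_cancel hr₀.ne', ENNReal.rpow_one]
  have holder : ∫⁻ x, k x * f x ∂μ ≤
      (∫⁻ x, k x ∂μ) ^ (1 - 1 / r) * (∫⁻ x, k x * f x ^ r ∂μ) ^ (1 / r) :=
    (lintegral_congr hkf).trans_le (ENNReal.lintegral_mul_norm_pow_le hk.aemeasurable
      (by fun_prop) h_sub h_inv (sub_add_cancel _ _))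
  refine (ENNReal.rpow_le_rpow holder hr₀.le).trans_eq ?_
  rw [ENNReal.mul_rpow_of_nonneg _ _ hr₀.le, ← ENNReal.rpow_mul, ← ENNReal.rpow_mul,
    sub_mul, one_div_mul_cancel hr₀.ne', one_mul, ENNReal.rpow_one]

section SchurTest

variable [SFinite μ] [SFinite ν] {K : α → β → ℝ≥0∞} {C : ℝ≥0∞} {f : β → ℝ≥0∞}

lemma lintegral_rpow_lintegral_mul_le (hK : Measurable (Function.uncurry K))
    (hC_left : ∀ x, ∫⁻ y, K x y ∂ν ≤ C) (hC_right : ∀ y, ∫⁻ x, K x y ∂μ ≤ C)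
    (hf : Measurable f) {r : ℝ} (hr : 1 ≤ r) :
    ∫⁻ x, (∫⁻ y, K x y * f y ∂ν) ^ r ∂μ ≤ C ^ r * ∫⁻ y, f y ^ r ∂ν := by
  have hr' : 0 ≤ r - 1 := sub_nonneg.2 hr
  have hKf : Measurable (Function.uncurry fun x y => K x y * f y ^ r) := hK.mul (by fun_prop)
  calc ∫⁻ x, (∫⁻ y, K x y * f y ∂ν) ^ r ∂μ
      ≤ ∫⁻ x, C ^ (r - 1) * ∫⁻ y, K x y * f y ^ r ∂ν ∂μ := by
        gcongr with x
        refine (lintegral_mul_rpow_le hK.of_uncurry_left hf hr).trans ?_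
        gcongr
        exact hC_left x
    _ = C ^ (r - 1) * ∫⁻ x, ∫⁻ y, K x y * f y ^ r ∂ν ∂μ :=
        lintegral_const_mul _ hKf.lintegral_prod_right'
    _ = C ^ (r - 1) * ∫⁻ y, ∫⁻ x, K x y * f y ^ r ∂μ ∂ν := by
        rw [lintegral_lintegral_swap hKf.aemeasurable]
    _ ≤ C ^ (r - 1) * ∫⁻ y, C * f y ^ r ∂ν := by
        gcongr with y
        rw [lintegral_mul_const _ hK.of_uncurry_right]
        gcongr
        exact hC_right y
    _ = C ^ r * ∫⁻ y, f y ^ r ∂ν := by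
        rw [lintegral_const_mul _ (by fun_prop), ← mul_assoc]
        nth_rw 2 [← ENNReal.rpow_one C]
        rw [← ENNReal.rpow_add_of_nonneg _ _ hr' zero_le_one, sub_add_cancel]

theorem eLpNorm_lintegral_mul_le_of_lintegral_le (hK : Measurable (Function.uncurry K))
    (hC_left : ∀ x, ∫⁻ y, K x y ∂ν ≤ C) (hC_right : ∀ y, ∫⁻ x, K x y ∂μ ≤ C)
    (hf : Measurable f) {p : ℝ≥0∞} (hp : 1 ≤ p) :
    eLpNorm (fun x => ∫⁻ y, K x y * f y ∂ν) p μ ≤ C * eLpNorm f p ν := by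
  rcases eq_or_ne p ∞ with rfl | hp_top
  · refine essSup_le_of_ae_le _ (.of_forall fun x => ?_)
    calc ∫⁻ y, K x y * f y ∂ν ≤ ∫⁻ y, K x y * eLpNorm f ∞ ν ∂ν := by
          refine lintegral_mono_ae ?_
          filter_upwards [enorm_ae_le_eLpNormEssSup f ν] with y hy
          gcongr
          simpa using hy
      _ ≤ C * eLpNorm f ∞ ν := by
          rw [lintegral_mul_const _ hK.of_uncurry_left]
          gcongr
          exact hC_left x
  · have hr : 1 ≤ p.toReal := one_le_ennreal_toReal hp hp_top
    have hr₀ : 0 < p.toReal := by positivity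
    simp only [eLpNorm_eq_lintegral_rpow_enorm_toReal (zero_lt_one.trans_le hp).ne' hp_top,
      enorm_eq_self]
    rw [one_div, ENNReal.rpow_inv_le_iff hr₀, ENNReal.mul_rpow_of_nonneg _ _ hr₀.le,
      ENNReal.rpow_inv_rpow hr₀.ne']
    exact lintegral_rpow_lintegral_mul_le hK hC_left hC_right hf hr

end SchurTest

lemma eLpNorm_one_le_max_mul_eLpNorm {p : ℝ≥0∞} (hp : 1 ≤ p) {f : α → ℝ≥0∞} (hf : Measurable f) :
    eLpNorm f 1 μ ≤ max 1 (μ Set.univ) * eLpNorm f p μ := by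
  refine (eLpNorm_le_eLpNorm_mul_rpow_measure_univ hp hf.aestronglyMeasurable).trans ?_
  rw [mul_comm]
  gcongr
  have hp_Icc := one_div_toReal_mem_Icc hp
  rw [ENNReal.toReal_one, one_div_one]
  exact ennreal_rpow_le_max_one ⟨sub_nonneg.2 hp_Icc.2, sub_le_self _ hp_Icc.1⟩

lemma eLpNorm_indicator_const_le_mul_max {p : ℝ≥0∞} (hp : 1 ≤ p) (s : Set α) (c : ℝ≥0∞) :
    eLpNorm (s.indicator fun _ => c) p μ ≤ c * max 1 (μ s) := by
  refine (eLpNorm_indicator_const_le c p).trans ?_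
  rw [enorm_eq_self]
  gcongr
  exact ennreal_rpow_le_max_one (one_div_toReal_mem_Icc hp)

lemma eLpNorm_restrict_biUnion_finset_le {ι : Type*} (t : Finset ι) {s : ι → Set α}
    (hs : ∀ i, MeasurableSet (s i)) {p : ℝ≥0∞} (hp : 1 ≤ p) {f : α → ℝ≥0∞} (hf : Measurable f) :
    eLpNorm f p (μ.restrict (⋃ i ∈ t, s i)) ≤ ∑ i ∈ t, eLpNorm f p (μ.restrict (s i)) := by
  simp_rw [← eLpNorm_indicator_eq_eLpNorm_restrict (t.measurableSet_biUnion fun i _ => hs i),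
    ← eLpNorm_indicator_eq_eLpNorm_restrict (hs _)]
  refine (eLpNorm_mono_enorm fun x => ?_).trans
    (eLpNorm_sum_le (fun i _ => (hf.indicator (hs i)).aestronglyMeasurable) hp)
  simp only [enorm_eq_self, Finset.sum_apply]
  refine Set.indicator_apply_le' (fun hx => ?_) (fun _ => zero_le)
  obtain ⟨i, hi, hxi⟩ := Set.mem_iUnion₂.1 hx
  rw [← Set.indicator_of_mem hxi f]
  exact Finset.single_le_sum (f := fun i => (s i).indicator f x) (fun _ _ => zero_le) hi

lemma exists_measurable_le_forall_lintegral_mul_eq [SigmaFinite μ] (f : α → ℝ≥0∞) :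
    ∃ g : α → ℝ≥0∞, Measurable g ∧ g ≤ f ∧
      ∀ k : α → ℝ≥0∞, Measurable k → (∀ x, k x ≠ ∞) →
        ∫⁻ x, k x * f x ∂μ = ∫⁻ x, k x * g x ∂μ := by
  obtain ⟨g, hg, hgf, hfg⟩ := exists_measurable_le_forall_setLIntegral_eq μ f
  refine ⟨g, hg, hgf, fun k hk hk_top => le_antisymm ?_ (lintegral_mono fun x => by
    gcongr; exact hgf x)⟩
  obtain ⟨h, hh, hhkf, hkf⟩ := exists_measurable_le_lintegral_eq μ fun x => k x * f x
  have h_div_le : (fun x => h x / k x) ≤ᵐ[μ] g :=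
    ae_le_of_forall_setLIntegral_le_of_sigmaFinite (hh.div hk) fun s _ _ => by
      rw [← hfg s]
      exact lintegral_mono fun x => ENNReal.div_le_of_le_mul' (hhkf x)
  rw [hkf]
  refine lintegral_mono_ae ?_
  filter_upwards [h_div_le] with x hx
  rcases eq_or_ne (k x) 0 with hkx | hkx
  · simpa [hkx] using hhkf x
  · rwa [ENNReal.div_le_iff' hkx (hk_top x)] at hx

end MeasureSpace

section UniformlyLocal

/-- The norm of the uniformly local Lebesgue space `L^p_{uloc}`, with values in `ℝ≥0∞` so that it is
defined for every function. -/
noncomputable def ulocNorm {E F : Type*} [PseudoMetricSpace E] [MeasurableSpace E] [ENorm F]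
    (u : E → F) (p : ℝ≥0∞) (μ : Measure E) : ℝ≥0∞ :=
  ⨆ x₀ : E, eLpNorm u p (μ.restrict (ball x₀ 1))

lemma eLpNorm_restrict_ball_le_ulocNorm {E F : Type*} [PseudoMetricSpace E] [MeasurableSpace E]
    [ENorm F] (u : E → F) (p : ℝ≥0∞) (μ : Measure E) (x₀ : E) :
    eLpNorm u p (μ.restrict (ball x₀ 1)) ≤ ulocNorm u p μ :=
  le_iSup (fun x₀ => eLpNorm u p (μ.restrict (ball x₀ 1))) x₀

lemma ulocNorm_mono_enorm {E F G : Type*} [PseudoMetricSpace E] [MeasurableSpace E]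
    [TopologicalSpace F] [ContinuousENorm F] [TopologicalSpace G] [ContinuousENorm G]
    {u : E → F} {v : E → G} (h : ∀ x, ‖u x‖ₑ ≤ ‖v x‖ₑ) (p : ℝ≥0∞) (μ : Measure E) :
    ulocNorm u p μ ≤ ulocNorm v p μ :=
  iSup_mono fun _ => eLpNorm_mono_enorm h

variable {E : Type*} [NormedAddCommGroup E] [MeasurableSpace E] [BorelSpace E] (μ : Measure E)
  {f : E → ℝ≥0∞}

lemma setLIntegral_ball_le_mul_ulocNorm [μ.IsAddHaarMeasure] {p : ℝ≥0∞} (hp : 1 ≤ p)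
    (hf : Measurable f) (x₀ : E) :
    ∫⁻ y in ball x₀ 1, f y ∂μ ≤ max 1 (μ (ball 0 1)) * ulocNorm f p μ := by
  calc ∫⁻ y in ball x₀ 1, f y ∂μ = eLpNorm f 1 (μ.restrict (ball x₀ 1)) := by
        simp only [eLpNorm_one_eq_lintegral_enorm, enorm_eq_self]
    _ ≤ max 1 (μ (ball 0 1)) * eLpNorm f p (μ.restrict (ball x₀ 1)) := by
        rw [← Measure.addHaar_ball_center μ x₀, ← Measure.restrict_apply_univ]
        exact eLpNorm_one_le_max_mul_eLpNorm hp hf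
    _ ≤ max 1 (μ (ball 0 1)) * ulocNorm f p μ := by
        gcongr
        exact eLpNorm_restrict_ball_le_ulocNorm f p μ x₀

lemma exists_eLpNorm_restrict_closedBall_le_mul_ulocNorm [ProperSpace E] (R : ℝ) :
    ∃ N : ℕ, ∀ (p : ℝ≥0∞), 1 ≤ p → ∀ f : E → ℝ≥0∞, Measurable f → ∀ x₀ : E,
      eLpNorm f p (μ.restrict (closedBall x₀ R)) ≤ N * ulocNorm f p μ := by
  obtain ⟨t, -, ht, h_cover⟩ :=
    (isCompact_closedBall (0 : E) R).finite_cover_balls (e := 1) one_pos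
  lift t to Finset E using ht
  refine ⟨t.card, fun p hp f hf x₀ => ?_⟩
  have h_cover' : closedBall x₀ R ⊆ ⋃ i ∈ t, ball (x₀ + i) 1 := fun y hy => by
    have hy' : y - x₀ ∈ closedBall (0 : E) R := by simpa [dist_eq_norm] using hy
    simpa [dist_eq_norm, sub_sub] using h_cover hy'
  calc eLpNorm f p (μ.restrict (closedBall x₀ R))
      ≤ eLpNorm f p (μ.restrict (⋃ i ∈ t, ball (x₀ + i) 1)) :=
        eLpNorm_mono_measure f (Measure.restrict_mono h_cover' le_rfl)
    _ ≤ ∑ i ∈ t, eLpNorm f p (μ.restrict (ball (x₀ + i) 1)) :=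
        eLpNorm_restrict_biUnion_finset_le t (fun _ => measurableSet_ball) hp hf
    _ ≤ ∑ _i ∈ t, ulocNorm f p μ :=
        Finset.sum_le_sum fun i _ => eLpNorm_restrict_ball_le_ulocNorm f p μ (x₀ + i)
    _ = t.card * ulocNorm f p μ := by rw [Finset.sum_const, nsmul_eq_mul]

-- Average `f y` over the centres `z` of the unit balls containing `y`, then integrate in `y` first.
lemma measure_ball_mul_lintegral_mul_le [SecondCountableTopology E] [SFinite μ]
    [μ.IsAddHaarMeasure] {w : E → ℝ≥0∞} (hw : Measurable w)
    (hf : Measurable f) {c S : ℝ≥0∞} (hwc : ∀ y z, dist y z < 1 → w y ≤ c * w z)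
    (hS : ∀ z, ∫⁻ y in ball z 1, f y ∂μ ≤ S) :
    μ (ball 0 1) * ∫⁻ y, w y * f y ∂μ ≤ c * (∫⁻ z, w z ∂μ) * S := by
  have h_meas : Measurable
      (Function.uncurry fun y z => (ball z 1).indicator (fun y => w y * f y) y) :=
    Measurable.indicator (f := fun q : E × E => w q.1 * f q.1) (s := {q | dist q.1 q.2 < 1})
      (by fun_prop) (isOpen_lt (by fun_prop) (by fun_prop)).measurableSet
  calc μ (ball 0 1) * ∫⁻ y, w y * f y ∂μ
      = ∫⁻ y, ∫⁻ z, (ball z 1).indicator (fun y => w y * f y) y ∂μ ∂μ := by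
        rw [← lintegral_const_mul _ (by fun_prop)]
        refine lintegral_congr fun y => ?_
        have h_swap (z : E) : (ball z 1).indicator (fun y => w y * f y) y =
            (ball y 1).indicator (fun _ => w y * f y) z :=
          Set.indicator_eq_indicator mem_ball_comm rfl
        simp_rw [h_swap]
        rw [lintegral_indicator_const measurableSet_ball, Measure.addHaar_ball_center μ y, mul_comm]
    _ = ∫⁻ z, ∫⁻ y in ball z 1, w y * f y ∂μ ∂μ := by
        rw [lintegral_lintegral_swap h_meas.aemeasurable]
        simp_rw [lintegral_indicator measurableSet_ball]
    _ ≤ ∫⁻ z, c * w z * S ∂μ := by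
        refine lintegral_mono fun z => ?_
        calc ∫⁻ y in ball z 1, w y * f y ∂μ ≤ ∫⁻ y in ball z 1, c * w z * f y ∂μ :=
              setLIntegral_mono (by fun_prop) fun y hy => by gcongr; exact hwc y z hy
          _ ≤ c * w z * S := by
              rw [lintegral_const_mul _ hf]
              gcongr
              exact hS z
    _ = c * (∫⁻ z, w z ∂μ) * S := by
        rw [lintegral_mul_const _ (by fun_prop), lintegral_const_mul _ hw]

lemma one_add_norm_rpow_neg_le {E : Type*} [SeminormedAddCommGroup E] {a b : E} (hab : dist a b ≤ 1)
    {r : ℝ} (hr : 0 ≤ r) :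
    (1 + ‖a‖) ^ (-r) ≤ 2 ^ r * (1 + ‖b‖) ^ (-r) := by
  have h_norm : ‖b‖ ≤ ‖a‖ + dist a b := by
    rw [dist_comm, dist_eq_norm]
    exact norm_le_norm_add_norm_sub' b a
  exact rpow_neg_le_two_rpow_mul_rpow_neg (by positivity) (by positivity)
    (by linarith [norm_nonneg a]) hr

lemma exists_lintegral_one_add_norm_rpow_mul_le [NormedSpace ℝ E] [FiniteDimensional ℝ E]
    [μ.IsAddHaarMeasure] {r : ℝ} (hr : finrank ℝ E < r) :
    ∃ C : ℝ≥0, ∀ p : ℝ≥0∞, 1 ≤ p → ∀ f : E → ℝ≥0∞, Measurable f → ∀ x : E,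
      ∫⁻ y, ENNReal.ofReal ((1 + ‖x - y‖) ^ (-r)) * f y ∂μ ≤ C * ulocNorm f p μ := by
  set V := μ (ball 0 1)
  have hV₀ : V ≠ 0 := (measure_ball_pos μ _ one_pos).ne'
  have hV : V ≠ ∞ := measure_ball_lt_top.ne
  set w : E → ℝ≥0∞ := fun z => ENNReal.ofReal ((1 + ‖z‖) ^ (-r))
  have hw : Measurable w := by fun_prop
  have hw_int : ∫⁻ z, w z ∂μ ≠ ∞ := (finite_integral_one_add_norm hr).ne
  set c := ENNReal.ofReal (2 ^ r)
  have h_top : V⁻¹ * (c * (∫⁻ z, w z ∂μ) * max 1 V) ≠ ∞ := by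
    have : V⁻¹ ≠ ∞ := ENNReal.inv_ne_top.2 hV₀
    have : max 1 V ≠ ∞ := max_ne_top ENNReal.one_ne_top hV
    finiteness
  refine ⟨(V⁻¹ * (c * (∫⁻ z, w z ∂μ) * max 1 V)).toNNReal, fun p hp f hf x => ?_⟩
  have hwc (y z : E) (hyz : dist y z < 1) : w (x - y) ≤ c * w (x - z) := by
    rw [← ENNReal.ofReal_mul (by positivity)]
    have hxyz : dist (x - y) (x - z) ≤ 1 := (dist_sub_left x y z).trans_le hyz.le
    exact ENNReal.ofReal_le_ofReal
      (one_add_norm_rpow_neg_le hxyz ((Nat.cast_nonneg _).trans hr.le))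
  have h_avg := measure_ball_mul_lintegral_mul_le μ (w := fun y => w (x - y)) (by fun_prop) hf hwc
    (setLIntegral_ball_le_mul_ulocNorm μ hp hf)
  rw [lintegral_sub_left_eq_self w x] at h_avg
  rw [ENNReal.coe_toNNReal h_top, mul_assoc, ← ENNReal.div_eq_inv_mul,
    ENNReal.le_div_iff_mul_le (.inl hV₀) (.inl hV), mul_comm, mul_assoc _ (max 1 V)]
  exact h_avg

end UniformlyLocal

section TruncatedKernel

variable {E : Type*} [NormedAddCommGroup E] [NormedSpace ℝ E] [FiniteDimensional ℝ E]
  [MeasurableSpace E] [BorelSpace E] (μ : Measure E) [μ.IsAddHaarMeasure] {s : ℝ}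

lemma lintegral_comp_nnreal_smul (f : E → ℝ≥0∞) {r : ℝ≥0} (hr : r ≠ 0) :
    ∫⁻ x, f (r • x) ∂μ = ((r ^ finrank ℝ E)⁻¹ : ℝ≥0) * ∫⁻ x, f x ∂μ := by
  have hr' : (r : ℝ) ≠ 0 := by exact_mod_cast hr
  calc ∫⁻ x, f (r • x) ∂μ = ∫⁻ x, f x ∂μ.map ((r : ℝ) • ·) :=
        ((Homeomorph.smulOfNeZero (r : ℝ) hr').measurableEmbedding.lintegral_map f).symm
    _ = ((r ^ finrank ℝ E)⁻¹ : ℝ≥0) * ∫⁻ x, f x ∂μ := by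
        rw [Measure.map_addHaar_smul μ hr', lintegral_smul_measure, smul_eq_mul,
          abs_of_nonneg (by positivity), ← NNReal.coe_pow, ← NNReal.coe_inv,
          ENNReal.ofReal_coe_nnreal]

lemma integrable_min_norm_one_div_norm_rpow [Nontrivial E] (hs : s ∈ Set.Ioo 0 1) :
    Integrable (fun z : E => min ‖z‖ 1 / ‖z‖ ^ (finrank ℝ E + s)) μ := by
  rw [integrable_fun_norm_addHaar μ (f := fun t => min t 1 / t ^ (finrank ℝ E + s)),
    ← Set.Ioc_union_Ioi_eq_Ioi zero_le_one]
  have h_small : IntegrableOn (fun t : ℝ => t ^ (-s)) (Set.Ioc 0 1) :=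
    (intervalIntegral.intervalIntegrable_rpow' (neg_lt_neg hs.2)).1
  have h_large : IntegrableOn (fun t : ℝ => t ^ (-1 - s)) (Set.Ioi 1) :=
    integrableOn_Ioi_rpow_of_lt (sub_lt_self _ hs.1) one_pos
  refine (h_small.congr_fun (fun t ht => ?_) measurableSet_Ioc).union
    (h_large.congr_fun (fun t ht => ?_) measurableSet_Ioi)
  · rw [smul_eq_mul, min_eq_left ht.2, mul_div_assoc', pow_sub_one_mul Module.finrank_pos.ne',
      ← Real.rpow_natCast, ← Real.rpow_sub ht.1, sub_add_cancel_left]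
  · have ht₀ : 0 < t := one_pos.trans ht
    rw [smul_eq_mul, min_eq_right (Set.mem_Ioi.1 ht).le, mul_one_div, ← Real.rpow_natCast,
      ← Real.rpow_sub ht₀, Nat.cast_pred Module.finrank_pos]
    ring_nf

lemma lintegral_min_mul_norm_div_norm_rpow (a b : ℝ≥0) (hs : s ∈ Set.Ioo 0 1) :
    ∫⁻ z, ENNReal.ofReal (min (a * ‖z‖) b / ‖z‖ ^ (finrank ℝ E + s)) ∂μ =
      (b ^ (1 - s) * a ^ s : ℝ≥0) *
        ∫⁻ z, ENNReal.ofReal (min ‖z‖ 1 / ‖z‖ ^ (finrank ℝ E + s)) ∂μ := by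
  rcases eq_zero_or_pos a with rfl | ha
  · simp [NNReal.zero_rpow hs.1.ne']
  rcases eq_zero_or_pos b with rfl | hb
  · simp [min_eq_right (mul_nonneg a.coe_nonneg (norm_nonneg _)),
      NNReal.zero_rpow (sub_pos.2 hs.2).ne']
  set t : ℝ≥0 := a / b
  have ht : 0 < t := div_pos ha hb
  have h_scale (z : E) : ENNReal.ofReal (min (a * ‖z‖) b / ‖z‖ ^ (finrank ℝ E + s)) =
      (b * t ^ (finrank ℝ E + s) : ℝ≥0) *
        ENNReal.ofReal (min ‖t • z‖ 1 / ‖t • z‖ ^ (finrank ℝ E + s)) := by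
    have h_min : min (a * ‖z‖) b = b * min (t * ‖z‖) 1 := by
      rw [mul_min_of_nonneg _ _ b.coe_nonneg, mul_one, ← mul_assoc, ← NNReal.coe_mul,
        mul_div_cancel₀ a hb.ne']
    rw [← ENNReal.ofReal_coe_nnreal, ← ENNReal.ofReal_mul (NNReal.coe_nonneg _), h_min,
      NNReal.smul_def, norm_smul, NNReal.norm_eq, Real.mul_rpow t.coe_nonneg (norm_nonneg z),
      NNReal.coe_mul, NNReal.coe_rpow, ← mul_div_assoc, mul_right_comm, ← mul_comm ((t : ℝ) ^ _),
      mul_div_mul_left _ _ (Real.rpow_pos_of_pos (NNReal.coe_pos.2 ht) _).ne']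
  have h_const : b * t ^ (finrank ℝ E + s) * (t ^ finrank ℝ E)⁻¹ = b ^ (1 - s) * a ^ s := by
    rw [NNReal.rpow_add ht.ne', NNReal.rpow_natCast, NNReal.div_rpow, NNReal.rpow_sub hb.ne',
      NNReal.rpow_one]
    field_simp
  simp_rw [h_scale]
  rw [lintegral_const_mul _ (by fun_prop), lintegral_comp_nnreal_smul μ
    (fun z : E => ENNReal.ofReal (min ‖z‖ 1 / ‖z‖ ^ (finrank ℝ E + s))) ht.ne', ← mul_assoc,
    ← ENNReal.coe_mul, h_const]

end TruncatedKernel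

section CommutatorKernel

/-- The integral kernel of the commutator of multiplication by `φ` with the fractional Laplacian of
order `s`, up to its sign and the normalising constant of the fractional Laplacian. -/
noncomputable def commutatorKernel {E : Type*} [NormedAddCommGroup E] [NormedSpace ℝ E] (s : ℝ)
    (φ : E → ℝ) (x y : E) : ℝ :=
  (φ x - φ y) / ‖x - y‖ ^ (finrank ℝ E + s)

variable {E : Type*} [NormedAddCommGroup E] [NormedSpace ℝ E] {s : ℝ} {φ : E → ℝ}

lemma commutatorKernel_swap (s : ℝ) (φ : E → ℝ) (x y : E) :
    commutatorKernel s φ x y = -commutatorKernel s φ y x := by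
  rw [commutatorKernel, commutatorKernel, norm_sub_rev, ← neg_div, neg_sub]

lemma norm_commutatorKernel_le {A B : ℝ≥0} (hA : LipschitzWith A φ) (hB : ∀ x, ‖φ x‖ ≤ B)
    (s : ℝ) (x y : E) :
    ‖commutatorKernel s φ x y‖ ≤ min (A * ‖x - y‖) (2 * B : ℝ≥0) / ‖x - y‖ ^ (finrank ℝ E + s) := by
  rw [commutatorKernel, norm_div, Real.norm_of_nonneg (Real.rpow_nonneg (norm_nonneg _) _)]
  gcongr
  refine le_min (hA.norm_sub_le x y) ((norm_sub_le _ _).trans ?_)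
  push_cast
  linarith [hB x, hB y]

lemma enorm_commutatorKernel_le_of_notMem_closedBall {d b : ℝ≥0} {x₀ y : E}
    (hφ : Function.support φ ⊆ closedBall x₀ d) (hb : ∀ x, ‖φ x‖ ≤ b) (hs : 0 ≤ s)
    (hy : y ∉ closedBall x₀ (d + 1)) (x : E) :
    ‖commutatorKernel s φ x y‖ₑ ≤
      (closedBall x₀ d).indicator (fun _ => ((b * 2 ^ (finrank ℝ E + s) : ℝ≥0) : ℝ≥0∞)) x *
        ENNReal.ofReal ((1 + ‖x - y‖) ^ (-(finrank ℝ E + s))) := by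
  have hφ_zero {z : E} (hz : z ∉ closedBall x₀ d) : φ z = 0 :=
    Function.notMem_support.1 fun h => hz (hφ h)
  have hφy : φ y = 0 := hφ_zero fun h => hy (closedBall_subset_closedBall (by simp) h)
  by_cases hx : x ∈ closedBall x₀ d
  · have h_dist : 1 ≤ ‖x - y‖ := by
      rw [mem_closedBall, not_le] at hy
      rw [mem_closedBall] at hx
      rw [← dist_eq_norm]
      linarith [dist_triangle_left y x₀ x]
    rw [Set.indicator_of_mem hx, ← ofReal_norm, ← ENNReal.ofReal_coe_nnreal,
      ← ENNReal.ofReal_mul (NNReal.coe_nonneg _)]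
    apply ENNReal.ofReal_le_ofReal
    calc ‖commutatorKernel s φ x y‖ = ‖φ x‖ * ‖x - y‖ ^ (-(finrank ℝ E + s)) := by
          rw [commutatorKernel, hφy, sub_zero, norm_div,
            Real.norm_of_nonneg (Real.rpow_nonneg (norm_nonneg _) _), div_eq_mul_inv,
            ← Real.rpow_neg (norm_nonneg _)]
      _ ≤ b * (2 ^ (finrank ℝ E + s) * (1 + ‖x - y‖) ^ (-(finrank ℝ E + s))) := by
          gcongr
          · exact hb x
          · exact rpow_neg_le_two_rpow_mul_rpow_neg (by positivity) (by positivity)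
              (by linarith) (by positivity)
      _ = (b * 2 ^ (finrank ℝ E + s) : ℝ≥0) * (1 + ‖x - y‖) ^ (-(finrank ℝ E + s)) := by
          push_cast
          ring
  · simp [commutatorKernel, hφy, hφ_zero hx, hx]

lemma norm_le_mul_diam_support_add_one [Nontrivial E] {F : Type*} [NormedAddCommGroup F]
    {φ : E → F} {A : ℝ≥0} (hA : LipschitzWith A φ) (hφ : Bornology.IsBounded (Function.support φ))
    (x : E) : ‖φ x‖ ≤ A * (diam (Function.support φ) + 1) := by
  by_cases hx : φ x = 0
  · rw [hx, norm_zero]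
    positivity
  · obtain ⟨e, he⟩ := exists_norm_eq E
      (c := diam (Function.support φ) + 1) (by positivity)
    have h_out : φ (x + e) = 0 := by
      by_contra h
      have h_diam := dist_le_diam_of_mem hφ (x := x + e) (y := x) h hx
      rw [dist_self_add_left, he] at h_diam
      linarith
    calc ‖φ x‖ = ‖φ (x + e) - φ x‖ := by rw [h_out, zero_sub, norm_neg]
      _ ≤ A * ‖x + e - x‖ := hA.norm_sub_le _ _
      _ = A * (diam (Function.support φ) + 1) := by rw [add_sub_cancel_left, he]

lemma exists_support_subset_closedBall {E F : Type*} [PseudoMetricSpace E] [Nonempty E] [Zero F]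
    {φ : E → F} {d : ℝ} (hφ : Bornology.IsBounded (Function.support φ))
    (hd : diam (Function.support φ) ≤ d) : ∃ x₀, Function.support φ ⊆ closedBall x₀ d := by
  rcases (Function.support φ).eq_empty_or_nonempty with h | ⟨x₀, hx₀⟩
  · simp [h]
  · exact ⟨x₀, fun x hx => (dist_le_diam_of_mem hφ hx hx₀).trans hd⟩

variable [MeasurableSpace E] [BorelSpace E]

lemma measurable_uncurry_enorm_commutatorKernel [SecondCountableTopology E] (s : ℝ)
    (hφ : Continuous φ) : Measurable (Function.uncurry fun x y => ‖commutatorKernel s φ x y‖ₑ) := by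
  unfold commutatorKernel Function.uncurry
  fun_prop

lemma setLIntegral_compl_closedBall_commutatorKernel_mul_le (μ : Measure E) {d b : ℝ≥0} {x₀ : E}
    (hφ : Function.support φ ⊆ closedBall x₀ d) (hb : ∀ x, ‖φ x‖ ≤ b) (hs : 0 ≤ s)
    {f : E → ℝ≥0∞} (hf : Measurable f) (x : E) :
    ∫⁻ y in (closedBall x₀ (d + 1))ᶜ, ‖commutatorKernel s φ x y‖ₑ * f y ∂μ ≤
      (closedBall x₀ d).indicator (fun _ => ((b * 2 ^ (finrank ℝ E + s) : ℝ≥0) : ℝ≥0∞)) x *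
        ∫⁻ y, ENNReal.ofReal ((1 + ‖x - y‖) ^ (-(finrank ℝ E + s))) * f y ∂μ := by
  rw [← lintegral_const_mul _ (by fun_prop)]
  refine (setLIntegral_mono' measurableSet_closedBall.compl fun y hy => ?_).trans
    (setLIntegral_le_lintegral _ _)
  rw [← mul_assoc]
  gcongr
  exact enorm_commutatorKernel_le_of_notMem_closedBall hφ hb hs hy x

variable [FiniteDimensional ℝ E] (μ : Measure E) [μ.IsAddHaarMeasure]

lemma exists_lintegral_enorm_commutatorKernel_le [Nontrivial E] (hs : s ∈ Set.Ioo 0 1) :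
    ∃ C : ℝ≥0, ∀ (φ : E → ℝ) (A B : ℝ≥0), LipschitzWith A φ → (∀ x, ‖φ x‖ ≤ B) → ∀ x,
      ∫⁻ y, ‖commutatorKernel s φ x y‖ₑ ∂μ ≤ (C * (B ^ (1 - s) * A ^ s) : ℝ≥0) := by
  set I := ∫⁻ z : E, ENNReal.ofReal (min ‖z‖ 1 / ‖z‖ ^ (finrank ℝ E + s)) ∂μ
  have hI : I ≠ ∞ := (integrable_min_norm_one_div_norm_rpow μ hs).lintegral_lt_top.ne
  refine ⟨I.toNNReal * 2 ^ (1 - s), fun φ A B hA hB x => ?_⟩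
  calc ∫⁻ y, ‖commutatorKernel s φ x y‖ₑ ∂μ
      ≤ ∫⁻ y, ENNReal.ofReal
          (min (A * ‖x - y‖) (2 * B : ℝ≥0) / ‖x - y‖ ^ (finrank ℝ E + s)) ∂μ := by
        gcongr with y
        rw [← ofReal_norm]
        exact ENNReal.ofReal_le_ofReal (norm_commutatorKernel_le hA hB s x y)
    _ = ((2 * B) ^ (1 - s) * A ^ s : ℝ≥0) * I := by
        rw [lintegral_sub_left_eq_self (μ := μ) (fun z => ENNReal.ofReal
            (min (A * ‖z‖) (2 * B : ℝ≥0) / ‖z‖ ^ (finrank ℝ E + s))),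
          lintegral_min_mul_norm_div_norm_rpow μ A (2 * B) hs]
    _ = (I.toNNReal * 2 ^ (1 - s) * (B ^ (1 - s) * A ^ s) : ℝ≥0) := by
        rw [NNReal.mul_rpow]
        nth_rw 1 [← ENNReal.coe_toNNReal hI]
        rw [← ENNReal.coe_mul]
        ring_nf

lemma exists_eLpNorm_setLIntegral_closedBall_commutatorKernel_mul_le [Nontrivial E]
    (hs : s ∈ Set.Ioo 0 1) (R : ℝ) :
    ∃ C : ℝ≥0, ∀ (φ : E → ℝ) (A B : ℝ≥0), LipschitzWith A φ → (∀ x, ‖φ x‖ ≤ B) →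
      ∀ (p : ℝ≥0∞), 1 ≤ p → ∀ f : E → ℝ≥0∞, Measurable f → ∀ x₀ : E,
        eLpNorm (fun x => ∫⁻ y in closedBall x₀ R, ‖commutatorKernel s φ x y‖ₑ * f y ∂μ) p μ ≤
          (C * (B ^ (1 - s) * A ^ s) : ℝ≥0) * ulocNorm f p μ := by
  obtain ⟨C, hC⟩ := exists_lintegral_enorm_commutatorKernel_le μ hs
  obtain ⟨N, hN⟩ := exists_eLpNorm_restrict_closedBall_le_mul_ulocNorm μ R
  refine ⟨C * N, fun φ A B hA hB p hp f hf x₀ => ?_⟩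
  have hC_left (x : E) := (setLIntegral_le_lintegral (closedBall x₀ R) _).trans (hC φ A B hA hB x)
  have hC_right (y : E) :
      ∫⁻ x, ‖commutatorKernel s φ x y‖ₑ ∂μ ≤ (C * (B ^ (1 - s) * A ^ s) : ℝ≥0) := by
    simp_rw [commutatorKernel_swap s φ _ y, enorm_neg]
    exact hC φ A B hA hB y
  calc eLpNorm (fun x => ∫⁻ y in closedBall x₀ R, ‖commutatorKernel s φ x y‖ₑ * f y ∂μ) p μ
      ≤ (C * (B ^ (1 - s) * A ^ s) : ℝ≥0) * eLpNorm f p (μ.restrict (closedBall x₀ R)) :=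
        eLpNorm_lintegral_mul_le_of_lintegral_le
          (measurable_uncurry_enorm_commutatorKernel s hA.continuous) hC_left hC_right hf hp
    _ ≤ (C * (B ^ (1 - s) * A ^ s) : ℝ≥0) * (N * ulocNorm f p μ) := by
        gcongr
        exact hN p hp f hf x₀
    _ = (C * N * (B ^ (1 - s) * A ^ s) : ℝ≥0) * ulocNorm f p μ := by
        push_cast
        ring


lemma exists_eLpNorm_setLIntegral_compl_closedBall_commutatorKernel_mul_le (hs : 0 < s) (d : ℝ≥0) :
    ∃ C : ℝ≥0, ∀ (φ : E → ℝ) (x₀ : E), Function.support φ ⊆ closedBall x₀ d →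
      ∀ b : ℝ≥0, (∀ x, ‖φ x‖ ≤ b) → ∀ (p : ℝ≥0∞), 1 ≤ p → ∀ f : E → ℝ≥0∞, Measurable f →
        eLpNorm (fun x => ∫⁻ y in (closedBall x₀ (d + 1))ᶜ, ‖commutatorKernel s φ x y‖ₑ * f y ∂μ)
          p μ ≤ (C * b : ℝ≥0) * ulocNorm f p μ := by
  obtain ⟨C, hC⟩ := exists_lintegral_one_add_norm_rpow_mul_le μ (lt_add_of_pos_right _ hs)
  have hV : max 1 (μ (closedBall 0 d)) ≠ ∞ :=
    max_ne_top ENNReal.one_ne_top measure_closedBall_lt_top.ne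
  refine ⟨2 ^ (finrank ℝ E + s) * C * (max 1 (μ (closedBall 0 d))).toNNReal,
    fun φ x₀ hφ b hb p hp f hf => ?_⟩
  set c : ℝ≥0∞ := (b * 2 ^ (finrank ℝ E + s) : ℝ≥0) * (C * ulocNorm f p μ)
  have h_pointwise (x : E) :
      ∫⁻ y in (closedBall x₀ (d + 1))ᶜ, ‖commutatorKernel s φ x y‖ₑ * f y ∂μ ≤
        (closedBall x₀ d).indicator (fun _ => c) x := by
    refine (setLIntegral_compl_closedBall_commutatorKernel_mul_le μ hφ hb hs.le hf x).trans ?_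
    refine (mul_le_mul_right (hC p hp f hf x) _).trans_eq ?_
    exact (Set.indicator_mul_const _ _ _ x).symm
  calc eLpNorm
        (fun x => ∫⁻ y in (closedBall x₀ (d + 1))ᶜ, ‖commutatorKernel s φ x y‖ₑ * f y ∂μ) p μ
      ≤ eLpNorm ((closedBall x₀ d).indicator fun _ => c) p μ :=
        eLpNorm_mono_enorm fun x => by simpa only [enorm_eq_self] using h_pointwise x
    _ ≤ c * max 1 (μ (closedBall x₀ d)) := eLpNorm_indicator_const_le_mul_max hp _ c
    _ = (2 ^ (finrank ℝ E + s) * C * (max 1 (μ (closedBall 0 d))).toNNReal * b : ℝ≥0) *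
          ulocNorm f p μ := by
        rw [Measure.addHaar_closedBall_center, ENNReal.coe_mul, ENNReal.coe_mul,
          ENNReal.coe_toNNReal hV]
        simp only [c]
        push_cast
        ring


lemma exists_eLpNorm_lintegral_commutatorKernel_mul_le [Nontrivial E] (hs : s ∈ Set.Ioo 0 1)
    (d : ℝ≥0) :
    ∃ C : ℝ≥0, ∀ φ : E → ℝ, Bornology.IsBounded (Function.support φ) →
      diam (Function.support φ) ≤ d →
      ∀ A B : ℝ≥0, LipschitzWith A φ → (∀ x, ‖φ x‖ ≤ B) →
      ∀ p : ℝ≥0∞, 1 ≤ p → ∀ f : E → ℝ≥0∞, Measurable f →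
        eLpNorm (fun x => ∫⁻ y, ‖commutatorKernel s φ x y‖ₑ * f y ∂μ) p μ ≤
          (C * (B ^ (1 - s) * A ^ s) : ℝ≥0) * ulocNorm f p μ := by
  obtain ⟨C₁, h_near⟩ :=
    exists_eLpNorm_setLIntegral_closedBall_commutatorKernel_mul_le μ hs (d + 1)
  obtain ⟨C₂, h_far⟩ :=
    exists_eLpNorm_setLIntegral_compl_closedBall_commutatorKernel_mul_le μ hs.1 d
  refine ⟨C₁ + C₂ * (d + 1) ^ s, fun φ hφ hd A B hA hB p hp f hf => ?_⟩
  obtain ⟨x₀, hx₀⟩ := exists_support_subset_closedBall hφ hd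
  have hφ_le (x : E) : ‖φ x‖ ≤ (B ^ (1 - s) * (A * (d + 1)) ^ s : ℝ≥0) := by
    refine le_rpow_mul_rpow_of_le (norm_nonneg _) (hB x) ?_ ⟨hs.1.le, hs.2.le⟩
    refine (norm_le_mul_diam_support_add_one hA hφ x).trans ?_
    push_cast
    gcongr
  set g : Set E → E → ℝ≥0∞ := fun t x => ∫⁻ y in t, ‖commutatorKernel s φ x y‖ₑ * f y ∂μ
  have hg (t : Set E) : AEStronglyMeasurable (g t) μ :=
    ((measurable_uncurry_enorm_commutatorKernel s hA.continuous).mul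
      (hf.comp measurable_snd)).lintegral_prod_right'.aestronglyMeasurable
  calc eLpNorm (fun x => ∫⁻ y, ‖commutatorKernel s φ x y‖ₑ * f y ∂μ) p μ
      = eLpNorm (g (closedBall x₀ (d + 1)) + g (closedBall x₀ (d + 1))ᶜ) p μ := by
        simp only [g, Pi.add_def, lintegral_add_compl _ measurableSet_closedBall]
    _ ≤ eLpNorm (g (closedBall x₀ (d + 1))) p μ + eLpNorm (g (closedBall x₀ (d + 1))ᶜ) p μ :=
        eLpNorm_add_le (hg _) (hg _) hp
    _ ≤ (C₁ * (B ^ (1 - s) * A ^ s) : ℝ≥0) * ulocNorm f p μ +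
          (C₂ * (B ^ (1 - s) * (A * (d + 1)) ^ s) : ℝ≥0) * ulocNorm f p μ :=
        add_le_add (h_near φ A B hA hB p hp f hf x₀) (h_far φ x₀ hx₀ _ hφ_le p hp f hf)
    _ = ((C₁ + C₂ * (d + 1) ^ s) * (B ^ (1 - s) * A ^ s) : ℝ≥0) * ulocNorm f p μ := by
        rw [← add_mul, ← ENNReal.coe_add, NNReal.mul_rpow]
        ring_nf

end CommutatorKernel

theorem commutator_global_Lp_general {E F : Type*} [NormedAddCommGroup E] [NormedSpace ℝ E]
    [FiniteDimensional ℝ E] [Nontrivial E] [MeasurableSpace E] [BorelSpace E] (μ : Measure E)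
    [μ.IsAddHaarMeasure] [NormedAddCommGroup F] [NormedSpace ℝ F] [CompleteSpace F] {s : ℝ}
    (hs : s ∈ Set.Ioo 0 1) (c : ℝ) (d : ℝ≥0) :
    ∃ C : ℝ≥0, ∀ φ : E → ℝ, Bornology.IsBounded (Function.support φ) →
      diam (Function.support φ) ≤ d →
      ∀ A B : ℝ≥0, LipschitzWith A φ → (∀ x, ‖φ x‖ ≤ B) →
      ∀ p : ℝ≥0∞, 1 ≤ p → ∀ u : E → F,
        eLpNorm (fun x => c • ∫ y, commutatorKernel s φ x y • u y ∂μ) p μ ≤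
          (C * (B ^ (1 - s) * A ^ s) : ℝ≥0) * ulocNorm u p μ := by
  obtain ⟨C, hC⟩ := exists_eLpNorm_lintegral_commutatorKernel_mul_le μ hs d
  refine ⟨‖c‖₊ * C, fun φ hφ hd A B hA hB p hp u => ?_⟩
  -- Tonelli needs measurable functions, hence the minorant `g` of the norm of `u`.
  obtain ⟨g, hg, hgu, hg_eq⟩ := exists_measurable_le_forall_lintegral_mul_eq (μ := μ) (‖u ·‖ₑ)
  have h_int (x : E) : ‖∫ y, commutatorKernel s φ x y • u y ∂μ‖ₑ ≤
      ∫⁻ y, ‖commutatorKernel s φ x y‖ₑ * g y ∂μ := by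
    refine (enorm_integral_le_lintegral_enorm _).trans_eq ?_
    simp_rw [enorm_smul]
    exact hg_eq _ (measurable_uncurry_enorm_commutatorKernel s hA.continuous).of_uncurry_left
      fun _ => enorm_ne_top
  calc eLpNorm (fun x => c • ∫ y, commutatorKernel s φ x y • u y ∂μ) p μ
      = ‖c‖ₑ * eLpNorm (fun x => ∫ y, commutatorKernel s φ x y • u y ∂μ) p μ :=
        eLpNorm_const_smul c _ p μ
    _ ≤ ‖c‖ₑ * eLpNorm (fun x => ∫⁻ y, ‖commutatorKernel s φ x y‖ₑ * g y ∂μ) p μ := by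
        gcongr
        exact eLpNorm_mono_enorm h_int
    _ ≤ ‖c‖ₑ * ((C * (B ^ (1 - s) * A ^ s) : ℝ≥0) * ulocNorm u p μ) := by
        gcongr
        refine (hC φ hφ hd A B hA hB p hp g hg).trans ?_
        gcongr
        exact ulocNorm_mono_enorm hgu p μ
    _ = (‖c‖₊ * C * (B ^ (1 - s) * A ^ s) : ℝ≥0) * ulocNorm u p μ := by
        rw [enorm_eq_nnnorm, ← mul_assoc, ← ENNReal.coe_mul, mul_assoc]

/-- global `L^p` bound for the commutator `[φ, Λˢ]u` for a nonnegative
compactly supported `C¹` cutoff `φ`, in terms of `M_φ = ‖φ‖_∞^{1-s}‖∇φ‖_∞^s` and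
`‖u‖_{L^p_uloc}`. The commutator is given by its singular-integral representation. -/
theorem commutator_global_Lp (n : ℕ) (hn : 0 < n) (s : ℝ) (hs : s ∈ Set.Ioo (0 : ℝ) 1)
    (Cs : ℝ) (hCs : 0 < Cs) (d : ℝ) (hd : 0 < d) :
    ∃ C > 0, ∀ φ : EuclideanSpace ℝ (Fin n) → ℝ,
      ContDiff ℝ 1 φ → (∀ x, 0 ≤ φ x) → HasCompactSupport φ →
      Metric.diam (tsupport φ) ≤ d →
      ∀ A B : ℝ, (∀ x, ‖fderiv ℝ φ x‖ ≤ A) → (∀ x, |φ x| ≤ B) →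
      ∀ (p : ℝ≥0∞), 1 ≤ p → ∀ u : EuclideanSpace ℝ (Fin n) → ℝ,
        eLpNorm (fun x => Cs * ∫ y, (φ x - φ y) * u y / ‖x - y‖ ^ ((n : ℝ) + s)) p volume ≤
          ENNReal.ofReal (C * (B ^ (1 - s) * A ^ s + 1)) *
            ⨆ x₀ : EuclideanSpace ℝ (Fin n), eLpNorm u p (volume.restrict (ball x₀ 1)) := by
  have : Nonempty (Fin n) := ⟨⟨0, hn⟩⟩
  obtain ⟨C, hC⟩ := commutator_global_Lp_general (F := ℝ)
    (volume : Measure (EuclideanSpace ℝ (Fin n))) hs Cs ⟨d, hd.le⟩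
  refine ⟨C + 1, by positivity, fun φ hφ_diff _ hφ_supp hφ_diam A B hA hB p hp u => ?_⟩
  lift A to ℝ≥0 using (norm_nonneg _).trans (hA 0)
  lift B to ℝ≥0 using (abs_nonneg _).trans (hB 0)
  have hφ_bdd := hφ_supp.isCompact.isBounded
  have hφ_lip : LipschitzWith A φ :=
    lipschitzWith_of_nnnorm_fderiv_le (hφ_diff.differentiable one_ne_zero) hA
  have h_bound := hC φ (hφ_bdd.subset (subset_tsupport φ))
    ((diam_mono (subset_tsupport φ) hφ_bdd).trans hφ_diam) A B hφ_lip hB p hp u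
  simp_rw [commutatorKernel, smul_eq_mul, finrank_euclideanSpace_fin,
    ← mul_div_right_comm] at h_bound
  refine h_bound.trans ?_
  rw [← ENNReal.ofReal_coe_nnreal]
  unfold ulocNorm
  gcongr
  push_cast
  gcongr <;> linarith
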